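/- arXiv:1808.04747 — 2 statements merged into one kernel-verified Lean document; each statement's English description precedes it below -/
import Mathlib

section
/- Error estimate for the iterated optimal stopping approximation: suppose F is concave, let c > 0, let u be the solution of the QVI with switching cost c, and let (u^n)_{n≥0} be the iterated optimal stopping sequence for switching cost c. Then for any κ ∈ (0, c) and every n ≥ 0 (with the convention 0^0 = 1), 0 ≤ u − u^n ≤ L_κ(1 − μ)^n/μ componentwise, where L_κ = (2‖F(0)‖ + κ)/γ and μ = min(1, γκ/(2‖F(0)‖ + κ)). -/
open Filter Topology

noncomputable section

/-- A monotone system with constant `γ`: whenever `u i l - v i l` is the (nonnegative)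
maximum of all differences, `F u i l - F v i l ≥ γ (u i l - v i l)`. -/
def IsMonotoneSystem {N d : ℕ} (γ : ℝ)
    (F : (Fin d → Fin N → ℝ) → Fin d → Fin N → ℝ) : Prop :=
  ∀ u v : Fin d → Fin N → ℝ, ∀ i : Fin d, ∀ l : Fin N,
    (∀ (j : Fin d) (k : Fin N), u j k - v j k ≤ u i l - v i l) →
    0 ≤ u i l - v i l →
    γ * (u i l - v i l) ≤ F u i l - F v i l

/-- The intervention operator `(M_i u)_l = max_{j ≠ i} (u j l - c)`. -/
def Mop {N d : ℕ} (c : ℝ) (u : Fin d → Fin N → ℝ) (i : Fin d) (l : Fin N) : ℝ :=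
  ⨆ j : {j : Fin d // j ≠ i}, (u j l - c)

/-- The sup-norm `‖u‖ = max_{i,l} |u i l|`. -/
def supNorm {N d : ℕ} (u : Fin d → Fin N → ℝ) : ℝ :=
  ⨆ p : Fin d × Fin N, |u p.1 p.2|

/-- A penalty function: continuous, non-decreasing, vanishing on `(-∞,0]` and
positive on `(0,∞)`. -/
def IsPenaltyFunction (π : ℝ → ℝ) : Prop :=
  Continuous π ∧ Monotone π ∧ (∀ y : ℝ, y ≤ 0 → π y = 0) ∧ (∀ y : ℝ, 0 < y → 0 < π y)

/-- A concave system: each `F_i` is concave (componentwise). -/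
def IsConcaveSystem {N d : ℕ}
    (F : (Fin d → Fin N → ℝ) → Fin d → Fin N → ℝ) : Prop :=
  ∀ (i : Fin d) (u v : Fin d → Fin N → ℝ) (θ : ℝ), 0 ≤ θ → θ ≤ 1 → ∀ l : Fin N,
    θ * F u i l + (1 - θ) * F v i l ≤ F (fun j k => θ * u j k + (1 - θ) * v j k) i l

theorem ios_cmp {N d : ℕ} {γ : ℝ} (hγ : 0 < γ)
    {F : (Fin d → Fin N → ℝ) → Fin d → Fin N → ℝ} (hF : IsMonotoneSystem γ F)
    (v w : Fin d → Fin N → ℝ)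
    (h : ∀ i l, (∀ j k, v j k - w j k ≤ v i l - w i l) → F v i l ≤ F w i l ∨ v i l ≤ w i l) :
    ∀ i l, v i l ≤ w i l := by
  intro i l
  haveI : Nonempty (Fin d × Fin N) := ⟨(i, l)⟩
  obtain ⟨p, hp⟩ := Finite.exists_max (fun p : Fin d × Fin N => v p.1 p.2 - w p.1 p.2)
  have hmax : ∀ j k, v j k - w j k ≤ v p.1 p.2 - w p.1 p.2 := fun j k => hp (j, k)
  have h0 := hmax i l
  rcases h p.1 p.2 hmax with h1 | h1
  · by_contra hcon
    push Not at hcon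
    have h2 : 0 < v p.1 p.2 - w p.1 p.2 := by linarith
    have h3 := hF v w p.1 p.2 hmax h2.le
    have := mul_pos hγ h2
    linarith
  · linarith

theorem ios_le_Mop {N d : ℕ} (c : ℝ) (u : Fin d → Fin N → ℝ) (i j : Fin d) (l : Fin N)
    (h : j ≠ i) : u j l - c ≤ Mop c u i l :=
  le_ciSup (f := fun j : {j : Fin d // j ≠ i} => u j l - c) (Set.finite_range _).bddAbove ⟨j, h⟩

theorem ios_Mop_attained {N d : ℕ} (hd : 2 ≤ d) (c : ℝ) (u : Fin d → Fin N → ℝ) (i : Fin d)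
    (l : Fin N) : ∃ j, j ≠ i ∧ u j l - c = Mop c u i l := by
  haveI : Nontrivial (Fin d) := Fin.nontrivial_iff_two_le.mpr hd
  obtain ⟨j0, hj0⟩ := exists_ne i
  haveI : Nonempty {j : Fin d // j ≠ i} := ⟨⟨j0, hj0⟩⟩
  obtain ⟨j, hj⟩ := exists_eq_ciSup_of_finite (f := fun j : {j : Fin d // j ≠ i} => u j l - c)
  exact ⟨j.1, j.2, hj⟩

theorem ios_min {a b : ℝ} (h : min a b = 0) : 0 ≤ a ∧ 0 ≤ b ∧ (a = 0 ∨ b = 0) := by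
  refine ⟨h ▸ min_le_left a b, h ▸ min_le_right a b, ?_⟩
  rcases min_choice a b with h1 | h1
  · left; rw [← h1, h]
  · right; rw [← h1, h]

/-- Error estimate for the iterated optimal stopping approximation. -/
theorem iterated_optimal_stopping_error {N d : ℕ} (hN : 1 ≤ N) (hd : 2 ≤ d)
    (γ : ℝ) (hγ : 0 < γ)
    (F : (Fin d → Fin N → ℝ) → Fin d → Fin N → ℝ)
    (hFcont : Continuous F) (hFmono : IsMonotoneSystem γ F)
    (hFconc : IsConcaveSystem F)
    (c : ℝ) (hc : 0 < c)
    (u : Fin d → Fin N → ℝ)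
    (hu : ∀ i l, min (F u i l) (u i l - Mop c u i l) = 0)
    (U : ℕ → Fin d → Fin N → ℝ)
    (hU0 : ∀ i l, F (U 0) i l = 0)
    (hUn : ∀ m : ℕ, ∀ i l, min (F (U (m + 1)) i l) (U (m + 1) i l - Mop c (U m) i l) = 0)
    (κ : ℝ) (hκ0 : 0 < κ) (hκc : κ < c) :
    ∀ n : ℕ, ∀ i l,
      0 ≤ u i l - U n i l ∧
      u i l - U n i l ≤
        (2 * supNorm (F 0) + κ) / γ *
          (1 - min 1 (γ * κ / (2 * supNorm (F 0) + κ))) ^ n /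
          min 1 (γ * κ / (2 * supNorm (F 0) + κ)) := by
  set K := supNorm (F 0) with hK
  have hFK : ∀ i l, |F 0 i l| ≤ K := fun i l =>
    le_ciSup (f := fun p : Fin d × Fin N => |F 0 p.1 p.2|) (Set.finite_range _).bddAbove (i, l)
  have hK0 : 0 ≤ K := Real.iSup_nonneg (fun p => abs_nonneg _)
  set μ := min 1 (γ * κ / (2 * K + κ)) with hμ
  have hD : 0 < 2 * K + κ := by linarith
  have hμ1 : μ ≤ 1 := min_le_left _ _
  have hμ0 : 0 < μ := lt_min one_pos (by positivity)
  set A := K / γ with hA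
  have hA0 : 0 ≤ A := by positivity
  have hγA : γ * A = K := by rw [hA]; field_simp
  have hμA : μ * (2 * A) ≤ c := by
    have h1 : μ * (2 * K + κ) ≤ γ * κ := by
      have : μ ≤ γ * κ / (2 * K + κ) := min_le_right _ _
      rwa [le_div_iff₀ hD] at this
    have h2 : γ * (μ * (2 * A)) ≤ γ * c := by
      have e : γ * (μ * (2 * A)) = μ * (2 * K) := by rw [← hγA]; ring
      rw [e]
      have := mul_pos hμ0 hκ0
      have := mul_lt_mul_of_pos_left hκc hγ
      linarith
    exact le_of_mul_le_mul_left h2 hγ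
  have hFW : ∀ i l, 0 ≤ F (fun _ _ => A) i l := by
    intro i l
    have := hFmono (fun _ _ => A) 0 i l (by intros; simp) (by simpa using hA0)
    have h2 := abs_le.mp (hFK i l)
    simp only [Pi.zero_apply, sub_zero, hγA] at this
    linarith [h2.1]
  have hFV : ∀ i l, F (fun _ _ => -A) i l ≤ 0 := by
    intro i l
    have := hFmono 0 (fun _ _ => -A) i l (by intros; simp) (by simpa using hA0)
    have h2 := abs_le.mp (hFK i l)
    simp only [Pi.zero_apply, zero_sub, neg_neg, hγA] at this
    linarith [h2.2]
  have hFU : ∀ n i l, 0 ≤ F (U n) i l := by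
    intro n i l
    cases n with
    | zero => exact (hU0 i l).ge
    | succ m => exact (ios_min (hUn m i l)).1
  have hUlow : ∀ n i l, -A ≤ U n i l := fun n =>
    ios_cmp hγ hFmono (fun _ _ => -A) (U n) (fun i l _ => Or.inl ((hFV i l).trans (hFU n i l)))
  have huA : ∀ i l, u i l ≤ A := by
    refine ios_cmp hγ hFmono u (fun _ _ => A) ?_
    intro i l hmax
    rcases (ios_min (hu i l)).2.2 with h | h
    · left; rw [h]; exact hFW i l
    · exfalso
      obtain ⟨j, _, hj⟩ := ios_Mop_attained hd c u i l
      have := hmax j l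
      linarith
  have hle : ∀ n i l, U n i l ≤ u i l := by
    intro n
    induction n with
    | zero =>
      exact ios_cmp hγ hFmono _ _ (fun i l _ => Or.inl (by rw [hU0]; exact (ios_min (hu i l)).1))
    | succ m ih =>
      refine ios_cmp hγ hFmono _ _ (fun i l _ => ?_)
      obtain ⟨h1, h2, _⟩ := ios_min (hu i l)
      rcases (ios_min (hUn m i l)).2.2 with h | h
      · left; rw [h]; exact h1
      · right
        obtain ⟨j, hji, hj⟩ := ios_Mop_attained hd c (U m) i l
        have := ios_le_Mop c u i j l hji
        have := ih j l
        linarith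
  have hp0 : ∀ n : ℕ, 0 ≤ (1 - μ) ^ n := fun n => pow_nonneg (by linarith) n
  have hp1 : ∀ n : ℕ, (1 - μ) ^ n ≤ 1 := fun n => pow_le_one₀ (by linarith) (by linarith)
  have hup : ∀ n i l, u i l ≤ (1 - μ) ^ n * A + (1 - (1 - μ) ^ n) * U n i l := by
    intro n
    induction n with
    | zero => intro i l; simpa using huA i l
    | succ m ih =>
      refine ios_cmp hγ hFmono u
        (fun i l => (1 - μ) ^ (m + 1) * A + (1 - (1 - μ) ^ (m + 1)) * U (m + 1) i l) ?_
      intro i l _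
      rcases (ios_min (hu i l)).2.2 with h | h
      · left
        have h1 := hFconc i (fun _ _ => A) (U (m + 1)) ((1 - μ) ^ (m + 1)) (hp0 _) (hp1 _) l
        have h2 := mul_nonneg (hp0 (m + 1)) (hFW i l)
        have h3 := mul_nonneg (sub_nonneg.mpr (hp1 (m + 1))) (hFU (m + 1) i l)
        rw [h]
        linarith
      · right
        obtain ⟨j, hji, hj⟩ := ios_Mop_attained hd c u i l
        have h1 := ih j l
        have h2 := ios_le_Mop c (U m) i j l hji
        have h3 := (ios_min (hUn m i l)).2.1
        have h4 : U m j l ≤ U (m + 1) i l + c := by linarith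
        have h5 := mul_le_mul_of_nonneg_left h4 (sub_nonneg.mpr (hp1 m))
        have h6 : μ * (A - U (m + 1) i l) ≤ c := by
          have := mul_le_mul_of_nonneg_left
            (show A - U (m + 1) i l ≤ 2 * A by linarith [hUlow (m + 1) i l]) hμ0.le
          linarith
        have h7 := mul_le_mul_of_nonneg_left h6 (hp0 m)
        rw [pow_succ]
        linarith
  intro n i l
  refine ⟨by linarith [hle n i l], ?_⟩
  have h1 := hup n i l
  have h2 : u i l - U n i l ≤ (1 - μ) ^ n * (2 * A) := by
    have := mul_le_mul_of_nonneg_left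
      (show A - U n i l ≤ 2 * A by linarith [hUlow n i l]) (hp0 n)
    linarith
  have h3 : 2 * A ≤ (2 * K + κ) / γ := by
    rw [le_div_iff₀ hγ]
    linarith
  rw [le_div_iff₀ hμ0]
  have h4 := mul_le_mul_of_nonneg_left h3 (hp0 n)
  have h5 : (u i l - U n i l) * μ ≤ (u i l - U n i l) * 1 :=
    mul_le_mul_of_nonneg_left hμ1 (by linarith [hle n i l])
  linarith
end
end

section
/- Explicit penalty error bound for positive switching cost: suppose F is concave and there exist constants τ > 0 and σ > 0 such that π(y) ≥ τ·y^{1/σ} for all 0 ≤ y ≤ 2‖F(0)‖/γ. Let c > 0, let u be the solution of the QVI with switching cost c, and for ρ > 0 let u^ρ be the solution of the penalized equation with penalty parameter ρ and switching cost c. Then u^ρ ≤ u, and for any κ ∈ (0, c) and every n ≥ 0 (with the convention 0^0 = 1), ‖u − u^ρ‖ ≤ L_κ(1 − μ)^n/μ + (C/(τρ))^σ · n, where L_κ = (2‖F(0)‖ + κ)/γ, μ = min(1, κ/L_κ), and C = sup over {v ∈ ℝ^{N×d} : ‖v‖ ≤ ‖F(0)‖/γ} of ‖F(v)‖. -/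
open Filter Topology

noncomputable section

/-- The project sup-norm agrees with the norm of the Pi type. -/
theorem supNorm_eq_norm {N d : ℕ} (u : Fin d → Fin N → ℝ) : supNorm u = ‖u‖ := by
  unfold supNorm
  apply le_antisymm
  · apply Real.iSup_le _ (norm_nonneg _)
    rintro ⟨i, l⟩
    rw [← Real.norm_eq_abs]
    exact (norm_le_pi_norm (u i) l).trans (norm_le_pi_norm u i)
  · have h0 : 0 ≤ ⨆ p : Fin d × Fin N, |u p.1 p.2| := Real.iSup_nonneg fun _ => abs_nonneg _
    rw [pi_norm_le_iff_of_nonneg h0]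
    intro i
    rw [pi_norm_le_iff_of_nonneg h0]
    intro l
    rw [Real.norm_eq_abs]
    exact le_ciSup (f := fun p : Fin d × Fin N => |u p.1 p.2|)
      (Set.finite_range _).bddAbove (i, l)

theorem abs_le_supNorm {N d : ℕ} (u : Fin d → Fin N → ℝ) (i : Fin d) (l : Fin N) :
    |u i l| ≤ supNorm u :=
  le_ciSup (f := fun p : Fin d × Fin N => |u p.1 p.2|)
      (Set.finite_range _).bddAbove (i, l)

/-- Lower bound for supersolutions. -/
theorem lower_bound {N d : ℕ} {γ : ℝ} (hγ : 0 < γ)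
    {F : (Fin d → Fin N → ℝ) → Fin d → Fin N → ℝ} (hF : IsMonotoneSystem γ F)
    (u : Fin d → Fin N → ℝ) (hu : ∀ i l, 0 ≤ F u i l) (i : Fin d) (l : Fin N) :
    -(supNorm (F 0) / γ) ≤ u i l := by
  haveI : Nonempty (Fin d × Fin N) := ⟨(i, l)⟩
  obtain ⟨⟨a, b⟩, hab⟩ := Finite.exists_min (fun p : Fin d × Fin N => u p.1 p.2)
  have h1 : u a b ≤ u i l := hab (i, l)
  have h2 := abs_le.1 (abs_le_supNorm (F 0) a b)
  have h3 : 0 ≤ supNorm (F 0) := (abs_nonneg _).trans (abs_le_supNorm (F 0) a b)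
  have h3' : 0 ≤ supNorm (F 0) / γ := by positivity
  by_cases h : 0 ≤ u a b
  · linarith
  have h4 := hF 0 u a b (fun j k => by simpa using hab (j, k)) (by simp; linarith)
  simp only [Pi.zero_apply] at h4
  have h5 := hu a b
  have h6 : - u a b ≤ supNorm (F 0) / γ := by
    rw [le_div_iff₀ hγ]
    nlinarith [h2.2]
  linarith

/-- Upper bound for subsolutions. -/
theorem upper_bound {N d : ℕ} {γ : ℝ} (hγ : 0 < γ)
    {F : (Fin d → Fin N → ℝ) → Fin d → Fin N → ℝ} (hF : IsMonotoneSystem γ F)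
    (u : Fin d → Fin N → ℝ)
    (hu : ∀ i l, (∀ j k, u j k ≤ u i l) → F u i l ≤ 0) (i : Fin d) (l : Fin N) :
    u i l ≤ supNorm (F 0) / γ := by
  haveI : Nonempty (Fin d × Fin N) := ⟨(i, l)⟩
  obtain ⟨⟨a, b⟩, hab⟩ := Finite.exists_max (fun p : Fin d × Fin N => u p.1 p.2)
  have h1 : u i l ≤ u a b := hab (i, l)
  have h2 := abs_le.1 (abs_le_supNorm (F 0) a b)
  have h3 : 0 ≤ supNorm (F 0) := (abs_nonneg _).trans (abs_le_supNorm (F 0) a b)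
  have h3' : 0 ≤ supNorm (F 0) / γ := by positivity
  by_cases h : u a b ≤ 0
  · linarith
  have h4 := hF u 0 a b (fun j k => by simpa using hab (j, k)) (by simp; linarith)
  simp only [Pi.zero_apply] at h4
  have h5 := hu a b (fun j k => hab (j, k))
  have h6 : u a b ≤ supNorm (F 0) / γ := by
    rw [le_div_iff₀ hγ]
    nlinarith [h2.1]
  linarith

/-- Comparison principle for the QVI with positive switching cost. -/
theorem qvi_comparison {N d : ℕ} {γ : ℝ} (hγ : 0 < γ)
    {F : (Fin d → Fin N → ℝ) → Fin d → Fin N → ℝ} (hF : IsMonotoneSystem γ F)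
    {c : ℝ} (hc : 0 < c) (u v : Fin d → Fin N → ℝ)
    (hu : ∀ i l, F u i l ≤ 0 ∨ ∃ j, u i l = u j l - c)
    (hv : ∀ i l, 0 ≤ F v i l) (hv' : ∀ i l j, j ≠ i → v j l - c ≤ v i l)
    (i : Fin d) (l : Fin N) : u i l ≤ v i l := by
  haveI : Nonempty (Fin d × Fin N) := ⟨(i, l)⟩
  obtain ⟨p, hp⟩ := Finite.exists_max (fun p : Fin d × Fin N => u p.1 p.2 - v p.1 p.2)
  obtain ⟨⟨a, b⟩, hab, hmax⟩ := Finset.exists_max_image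
    (Finset.univ.filter fun q : Fin d × Fin N => u q.1 q.2 - v q.1 q.2 = u p.1 p.2 - v p.1 p.2)
    (fun q => u q.1 q.2) ⟨p, by simp⟩
  simp only [Finset.mem_filter, Finset.mem_univ, true_and] at hab hmax
  have h1 := hp (i, l)
  simp only at h1
  by_contra hcon
  have h2 : 0 < u a b - v a b := by linarith
  have h3 := hF u v a b (fun j k => by have := hp (j, k); simp only at this; linarith) h2.le
  have h4 : 0 < γ * (u a b - v a b) := by positivity
  rcases hu a b with h | ⟨j, hj⟩
  · linarith [hv a b]
  · by_cases hja : j = a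
    · subst hja; linarith
    have h5 := hv' a b j hja
    have h6 := hp (j, b)
    simp only at h6
    have h7 := hmax (j, b) (by simp only; linarith)
    simp only at h7
    linarith

/-- Explicit penalty error bound for positive switching cost. -/
theorem penalty_error_bound_positive_cost {N d : ℕ} (hN : 1 ≤ N) (hd : 2 ≤ d)
    (γ : ℝ) (hγ : 0 < γ)
    (F : (Fin d → Fin N → ℝ) → Fin d → Fin N → ℝ)
    (hFcont : Continuous F) (hFmono : IsMonotoneSystem γ F)
    (hFconc : IsConcaveSystem F)
    (π : ℝ → ℝ) (hπ : IsPenaltyFunction π)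
    (τ σ : ℝ) (hτ : 0 < τ) (hσ : 0 < σ)
    (hπlow : ∀ y : ℝ, 0 ≤ y → y ≤ 2 * supNorm (F 0) / γ → τ * y ^ (1 / σ) ≤ π y)
    (c : ℝ) (hc : 0 < c)
    (u : Fin d → Fin N → ℝ)
    (hu : ∀ i l, min (F u i l) (u i l - Mop c u i l) = 0)
    (ρ : ℝ) (hρ : 0 < ρ)
    (uρ : Fin d → Fin N → ℝ)
    (huρ : ∀ i l, F uρ i l - ρ * ∑ j ∈ Finset.univ.erase i, π (uρ j l - c - uρ i l) = 0) :
    (∀ i l, uρ i l ≤ u i l) ∧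
    ∀ κ : ℝ, 0 < κ → κ < c → ∀ n : ℕ,
      supNorm (fun i l => u i l - uρ i l) ≤
        (2 * supNorm (F 0) + κ) / γ *
          (1 - min 1 (κ / ((2 * supNorm (F 0) + κ) / γ))) ^ n /
          min 1 (κ / ((2 * supNorm (F 0) + κ) / γ)) +
        (sSup ((fun v => supNorm (F v)) '' {v | supNorm v ≤ supNorm (F 0) / γ}) / (τ * ρ)) ^ σ
          * n := by
  obtain ⟨-, hπm, hπ0, hπp⟩ := hπ
  have hd' : ∀ i : Fin d, Nonempty {j : Fin d // j ≠ i} := by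
    intro i
    haveI : Nontrivial (Fin d) := Fin.nontrivial_iff_two_le.2 hd
    obtain ⟨j, hj⟩ := exists_ne i
    exact ⟨⟨j, hj⟩⟩
  -- unpack the QVI
  have huF : ∀ i l, 0 ≤ F u i l := fun i l => (hu i l) ▸ min_le_left _ _
  have huM : ∀ i l j, j ≠ i → u j l - c ≤ u i l := by
    intro i l j hj
    have h1 : 0 ≤ u i l - Mop c u i l := (hu i l) ▸ min_le_right _ _
    have h2 : u j l - c ≤ Mop c u i l :=
      le_ciSup (f := fun j : {j : Fin d // j ≠ i} => u j l - c)
        (Set.finite_range _).bddAbove ⟨j, hj⟩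
    linarith
  have huE : ∀ i l, F u i l ≤ 0 ∨ ∃ j, u i l = u j l - c := by
    intro i l
    haveI := hd' i
    rcases min_choice (F u i l) (u i l - Mop c u i l) with h | h
    · left; rw [← h, hu]
    · right
      rw [hu] at h
      obtain ⟨j, hj⟩ := exists_eq_ciSup_of_finite (f := fun j : {j : Fin d // j ≠ i} => u j l - c)
      refine ⟨j, ?_⟩
      have : Mop c u i l = u j l - c := hj.symm
      linarith
  have hπnn : ∀ y, 0 ≤ π y := by
    intro y
    rcases le_or_gt y 0 with h | h
    · rw [hπ0 y h]
    · exact (hπp y h).le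
  -- unpack the penalized equation
  have hrF : ∀ i l, F uρ i l = ρ * ∑ j ∈ Finset.univ.erase i, π (uρ j l - c - uρ i l) :=
    fun i l => by linarith [huρ i l]
  have hrF0 : ∀ i l, 0 ≤ F uρ i l := by
    intro i l
    rw [hrF]
    exact mul_nonneg hρ.le (Finset.sum_nonneg fun _ _ => hπnn _)
  have hrz : ∀ i l, (∀ j, j ≠ i → uρ j l - c - uρ i l ≤ 0) → F uρ i l = 0 := by
    intro i l h
    rw [hrF, Finset.sum_eq_zero, mul_zero]
    intro j hj
    exact hπ0 _ (h j (Finset.ne_of_mem_erase hj))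
  have hle : ∀ i l, uρ i l ≤ u i l := by
    intro i l
    haveI : Nonempty (Fin d × Fin N) := ⟨(i, l)⟩
    obtain ⟨⟨a, b⟩, hab⟩ := Finite.exists_max (fun p : Fin d × Fin N => uρ p.1 p.2 - u p.1 p.2)
    simp only at hab
    by_contra hcon
    have h1 := hab (i, l)
    simp only at h1
    have h2 : 0 < uρ a b - u a b := by linarith
    have h3 := hFmono uρ u a b (fun j k => hab (j, k)) h2.le
    have h4 : 0 < γ * (uρ a b - u a b) := by positivity
    have h5 := hrz a b (fun j hj => by
      have h6 := hab (j, b)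
      have h7 := huM a b j hj
      simp only at h6
      linarith)
    linarith [huF a b]
  refine ⟨hle, ?_⟩
  intro κ hκ hκc n
  set A := supNorm (F 0) with hA
  have hA0 : 0 ≤ A := by rw [hA, supNorm_eq_norm]; exact norm_nonneg _
  set C := sSup ((fun v => supNorm (F v)) '' {v | supNorm v ≤ A / γ}) with hC
  have hAγ : 0 ≤ A / γ := by positivity
  have hlo := lower_bound hγ hFmono u huF
  have hrlo := lower_bound hγ hFmono uρ hrF0
  have hrhi := upper_bound hγ hFmono uρ (fun i l h =>
    (hrz i l (fun j _ => by linarith [h j l])).le)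
  have hhi := upper_bound hγ hFmono u (fun i l h => by
    rcases huE i l with h1 | ⟨j, hj⟩
    · exact h1
    · linarith [h j l])
  rw [← hA] at hlo hrlo hrhi hhi
  have hbdd : BddAbove ((fun v => supNorm (F v)) '' {v | supNorm v ≤ A / γ}) := by
    simp only [supNorm_eq_norm]
    have h1 : {v : Fin d → Fin N → ℝ | ‖v‖ ≤ A / γ} = Metric.closedBall 0 (A / γ) := by
      ext v; simp
    rw [h1]
    exact (isCompact_closedBall (0 : Fin d → Fin N → ℝ) (A / γ)).bddAbove_image
      hFcont.norm.continuousOn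
  have hmem : supNorm uρ ≤ A / γ := by
    unfold supNorm
    exact Real.iSup_le (fun p => abs_le.2 ⟨hrlo _ _, hrhi _ _⟩) hAγ
  have hCle : supNorm (F uρ) ≤ C := le_csSup hbdd ⟨uρ, hmem, rfl⟩
  have hC0 : 0 ≤ C := by
    refine le_trans ?_ hCle
    rw [supNorm_eq_norm]; exact norm_nonneg _
  set ε := (C / (τ * ρ)) ^ σ with hε
  have hCτ : 0 ≤ C / (τ * ρ) := by positivity
  have hε0 : 0 ≤ ε := Real.rpow_nonneg hCτ _
  -- size of the constraint violation
  have hviol : ∀ i l j, j ≠ i → uρ j l - c - uρ i l ≤ ε := by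
    intro i l j hj
    rcases le_or_gt (uρ j l - c - uρ i l) 0 with h | h
    · linarith
    set y := uρ j l - c - uρ i l with hy
    have h1 : y ≤ 2 * A / γ := by
      have : 2 * A / γ = A / γ + A / γ := by ring
      linarith [hrhi j l, hrlo i l]
    have h2 := hπlow y h.le h1
    have h3 : π y ≤ ∑ j ∈ Finset.univ.erase i, π (uρ j l - c - uρ i l) :=
      Finset.single_le_sum (f := fun j => π (uρ j l - c - uρ i l)) (fun _ _ => hπnn _)
        (Finset.mem_erase.2 ⟨hj, Finset.mem_univ _⟩)
    have h4 : ρ * π y ≤ C := by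
      refine le_trans (mul_le_mul_of_nonneg_left h3 hρ.le) ?_
      rw [← hrF]
      exact (le_abs_self _).trans ((abs_le_supNorm (F uρ) i l).trans hCle)
    have h5 : y ^ (1 / σ) ≤ C / (τ * ρ) := by
      rw [le_div_iff₀ (by positivity)]
      nlinarith [mul_le_mul_of_nonneg_left h2 hρ.le]
    have h6 : y = (y ^ (1 / σ)) ^ σ := by
      rw [← Real.rpow_mul h.le, one_div, inv_mul_cancel₀ hσ.ne', Real.rpow_one]
    rw [h6]
    exact Real.rpow_le_rpow (Real.rpow_nonneg h.le _) h5 hσ.le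
  -- the constant supersolution
  have hK : ∀ i l, 0 ≤ F (fun _ _ => A / γ) i l := by
    intro i l
    have h1 := hFmono (fun _ _ => A / γ) 0 i l (fun j k => by simp) (by simpa using hAγ)
    simp only [Pi.zero_apply, sub_zero] at h1
    have h2 : γ * (A / γ) = A := by field_simp
    have h3 := (abs_le.1 (abs_le_supNorm (F 0) i l)).1
    linarith
  have hcε : 0 < c + ε := by linarith
  set θ := ε / (c + ε) with hθ
  have hθ0 : 0 ≤ θ := by positivity
  have hθ1 : θ ≤ 1 := by rw [hθ, div_le_one hcε]; linarith
  have hθe : θ * (c + ε) = ε := by rw [hθ]; field_simp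
  have hcomp := qvi_comparison hγ hFmono hc u
    (fun j k => θ * (A / γ) + (1 - θ) * uρ j k) huE
    (fun i l => by
      have h1 := hFconc i (fun _ _ => A / γ) uρ θ hθ0 hθ1 l
      have h2 := mul_nonneg hθ0 (hK i l)
      have h3 := mul_nonneg (sub_nonneg.2 hθ1) (hrF0 i l)
      linarith)
    (fun i l j hj => by
      have h1 := mul_le_mul_of_nonneg_left (hviol i l j hj) (sub_nonneg.2 hθ1)
      nlinarith)
  set L := (2 * A + κ) / γ with hL
  have hL0 : 0 < L := by positivity
  set μ := min 1 (κ / L) with hμ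
  have hμ0 : 0 < μ := lt_min one_pos (by positivity)
  have hμ1 : μ ≤ 1 := min_le_left _ _
  have hμL : μ * L ≤ κ := by
    have : μ ≤ κ / L := min_le_right _ _
    rwa [le_div_iff₀ hL0] at this
  set D := supNorm (fun i l => u i l - uρ i l) with hD
  have hLA : 2 * (A / γ) ≤ L := by
    rw [hL, ← mul_div_assoc]
    gcongr
    linarith
  have hD1 : D ≤ L := by
    refine Real.iSup_le (fun p => abs_le.2 ⟨?_, ?_⟩) hL0.le
    · linarith [hle p.1 p.2]
    · linarith [hhi p.1 p.2, hrlo p.1 p.2]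
  have hD2 : D ≤ θ * L := by
    refine Real.iSup_le (fun p => abs_le.2 ⟨?_, ?_⟩) (by positivity)
    · have : 0 ≤ θ * L := by positivity
      linarith [hle p.1 p.2]
    · have h1 := hcomp p.1 p.2
      have h2 : θ * (A / γ - uρ p.1 p.2) ≤ θ * L :=
        mul_le_mul_of_nonneg_left (by linarith [hrlo p.1 p.2]) hθ0
      linarith
  have hD3 : μ * D ≤ ε := by
    have h1 : μ * D ≤ θ * (μ * L) := by nlinarith [mul_le_mul_of_nonneg_left hD2 hμ0.le]
    have h2 : θ * (μ * L) ≤ θ * (c + ε) := mul_le_mul_of_nonneg_left (by linarith) hθ0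
    linarith
  induction n with
  | zero =>
    simp only [pow_zero, mul_one, Nat.cast_zero, mul_zero, add_zero]
    rw [le_div_iff₀ hμ0]
    nlinarith
  | succ n ih =>
    have h1 := mul_le_mul_of_nonneg_left ih (sub_nonneg.2 hμ1)
    have h2 : 0 ≤ μ * (ε * n) := by positivity
    have h3 : (1 - μ) * (L * (1 - μ) ^ n / μ) = L * (1 - μ) ^ (n + 1) / μ := by ring
    push_cast
    rw [mul_add, h3] at h1
    linarith
end
end
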